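/- (Pair symmetry of the curvature for a Levi-Civita structure, Eq. LGS.1b.) Suppose the connection D on U is g-compatible and symmetric (Γ x u v = Γ x v u for all x, u, v). Then for all vector fields a, b, c, d on U and every x ∈ U: ⟪g x (ρ(a,b,c) x), d x⟫ = ⟪g x (ρ(c,d,a) x), b x⟫, i.e. ρ(a,b,c) ·_g d = ρ(c,d,a) ·_g b. -/

import Mathlib

open scoped RealInnerProductSpace

variable {V : Type*} [NormedAddCommGroup V] [InnerProductSpace ℝ V] [FiniteDimensional ℝ V]

/-- A vector field on `U` is a smooth map `U → V`. -/
def IsVectorField (U : Set V) (X : V → V) : Prop := ContDiffOn ℝ (⊤ : ℕ∞) X U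

/-- Directional derivative `(a·∂X)(x) = fderiv ℝ X x (a x)`. -/
noncomputable def dirD (a X : V → V) : V → V := fun x => fderiv ℝ X x (a x)

/-- Lie bracket `[a,b] = a·∂b − b·∂a`. -/
noncomputable def bracket (a b : V → V) : V → V := fun x => dirD a b x - dirD b a x

/-- Smoothness of a connection field `Γ`. -/
def IsConnection (U : Set V) (Γ : V → V →ₗ[ℝ] V →ₗ[ℝ] V) : Prop :=
  ∀ u v : V, ContDiffOn ℝ (⊤ : ℕ∞) (fun x => Γ x u v) U

/-- Covariant derivative associated to the connection field `Γ`. -/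
noncomputable def covD (Γ : V → V →ₗ[ℝ] V →ₗ[ℝ] V) (a X : V → V) : V → V :=
  fun x => fderiv ℝ X x (a x) + Γ x (a x) (X x)

/-- Curvature of an abstract covariant-derivative operator. -/
noncomputable def curvOf (Dop : (V → V) → (V → V) → (V → V)) (a b c : V → V) : V → V :=
  fun x => Dop a (Dop b c) x - Dop b (Dop a c) x - Dop (bracket a b) c x

/-- Curvature field `ρ(a,b,c) = D_a (D_b c) − D_b (D_a c) − D_{[a,b]} c`. -/
noncomputable def curv (Γ : V → V →ₗ[ℝ] V →ₗ[ℝ] V) : (V → V) → (V → V) → (V → V) → V → V :=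
  curvOf (covD Γ)

/-- A metric on `U`: smooth, pointwise self-adjoint and invertible. -/
def IsMetric (U : Set V) (g : V → V →ₗ[ℝ] V) : Prop :=
  (∀ u : V, ContDiffOn ℝ (⊤ : ℕ∞) (fun x => g x u) U) ∧
  ∀ x ∈ U, (∀ u v : V, ⟪g x u, v⟫ = ⟪u, g x v⟫) ∧ Function.Bijective (g x)

/-- Compatibility of an abstract covariant-derivative operator with the metric `g`:
`a·∂(X ·_g Y) = (D_a X) ·_g Y + X ·_g (D_a Y)` on `U`. -/
def CompatibleD (U : Set V) (Dop : (V → V) → (V → V) → (V → V)) (g : V → V →ₗ[ℝ] V) : Prop :=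
  ∀ a X Y : V → V, IsVectorField U a → IsVectorField U X → IsVectorField U Y →
    ∀ x ∈ U, fderiv ℝ (fun y => ⟪g y (X y), Y y⟫) x (a x) =
      ⟪g x (Dop a X x), Y x⟫ + ⟪g x (X x), Dop a Y x⟫

/-- Compatibility of the connection `Γ` with the metric `g`. -/
def Compatible (U : Set V) (Γ : V → V →ₗ[ℝ] V →ₗ[ℝ] V) (g : V → V →ₗ[ℝ] V) : Prop :=
  CompatibleD U (covD Γ) g

/-!
Fix `x` and put `R(a, b, c, d) = ⟪g x (ρ(a, b, c) x), d x⟫`. Swapping `a` and `b` changes the sign of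
`R` by the definition of `ρ`. Swapping `c` and `d` changes it too, because the curvature operator of a
compatible connection acts on the function `c ·_g d` as the commutator of the second derivatives
along `a` and `b` minus the derivative along `[a, b]`, that is, as zero. Symmetry of `Γ` turns the
cyclic sum of `ρ(a, b, c)` into the cyclic sum of `[a, [b, c]]`, which vanishes by the Jacobi
identity. These three symmetries of `R` imply pair symmetry.
-/

open scoped ContDiff Topology

/-- Milnor's octahedron: up to sign, `R` takes six values on the arrangements of `a, b, c, d`, and
the cyclic identity relates them along four faces. The terms other than `R a b c d` and `R c d a b`
cancel in a signed sum of the four relations. -/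
theorem pair_symmetry_of_skew_of_cyclic {α M : Type*} [AddCommGroup M] [IsAddTorsionFree M]
    {R : α → α → α → α → M} (skew_left : ∀ a b c d, R b a c d = -R a b c d)
    (skew_right : ∀ a b c d, R a b d c = -R a b c d)
    (cyclic : ∀ a b c d, R a b c d + R b c a d + R c a b d = 0) (a b c d : α) :
    R a b c d = R c d a b := by
  have swap_both (a b c d : α) : R b a d c = R a b c d := by
    rw [skew_left, skew_right, neg_neg]
  have two_nsmul_eq : 2 • R a b c d = 2 • R c d a b := by
    rw [← sub_eq_zero]
    calc 2 • R a b c d - 2 • R c d a b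
        = (R a b c d + R b c a d + R c a b d) + (R b c d a + R c d b a + R d b c a)
          - (R c d a b + R d a c b + R a c d b) - (R d a b c + R a b d c + R b d a c) := by
          rw [skew_right a b c d, skew_right c d a b, skew_right b c a d, skew_right d a c b,
            swap_both c a b d, swap_both d b c a]
          abel
      _ = 0 := by simp only [cyclic, add_zero, sub_zero]
  exact nsmul_right_injective two_ne_zero two_nsmul_eq

theorem contDiffOn_linearMap_apply {𝕜 D E F : Type*} [NontriviallyNormedField 𝕜] [CompleteSpace 𝕜]
    [NormedAddCommGroup D] [NormedSpace 𝕜 D] [NormedAddCommGroup E] [NormedSpace 𝕜 E]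
    [FiniteDimensional 𝕜 E] [NormedAddCommGroup F] [NormedSpace 𝕜 F] {n : ℕ∞ω} {s : Set D}
    {A : D → E →ₗ[𝕜] F} {X : D → E} (hA : ∀ v, ContDiffOn 𝕜 n (fun x ↦ A x v) s)
    (hX : ContDiffOn 𝕜 n X s) : ContDiffOn 𝕜 n (fun x ↦ A x (X x)) s :=
  have hA' : ContDiffOn 𝕜 n (fun x ↦ (A x).toContinuousLinearMap) s := contDiffOn_clm_apply.2 hA
  hA'.clm_apply hX

theorem contDiffOn_inner_linearMap_apply {D : Type*} [NormedAddCommGroup D] [NormedSpace ℝ D]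
    {n : ℕ∞ω} {s : Set D} {A : D → V →ₗ[ℝ] V} {X Y : D → V}
    (hA : ∀ v, ContDiffOn ℝ n (fun x ↦ A x v) s) (hX : ContDiffOn ℝ n X s)
    (hY : ContDiffOn ℝ n Y s) : ContDiffOn ℝ n (fun x ↦ ⟪A x (X x), Y x⟫) s :=
  (contDiffOn_linearMap_apply hA hX).inner ℝ hY

variable {U : Set V} {Γ : V → V →ₗ[ℝ] V →ₗ[ℝ] V} {g : V → V →ₗ[ℝ] V} {a b c d X Y : V → V} {x : V}

section

omit [FiniteDimensional ℝ V]

theorem bracket_eq_lieBracket (a b : V → V) : bracket a b = VectorField.lieBracket ℝ a b := rfl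

theorem bracket_swap (a b : V → V) : bracket b a = -bracket a b :=
  funext fun _ ↦ VectorField.lieBracket_swap

theorem bracket_neg_right (a b : V → V) : bracket a (-b) = -bracket a b := by
  funext x
  simp only [bracket, dirD, fderiv_neg, Pi.neg_apply, neg_apply, map_neg]
  abel

theorem bracket_jacobi (ha : ContDiffAt ℝ 2 a x) (hb : ContDiffAt ℝ 2 b x)
    (hc : ContDiffAt ℝ 2 c x) :
    bracket a (bracket b c) x + bracket b (bracket c a) x + bracket c (bracket a b) x = 0 := by
  have leibniz : bracket a (bracket b c) x =
      bracket (bracket a b) c x + bracket b (bracket a c) x :=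
    VectorField.leibniz_identity_lieBracket (n := 2) (by simp) ha hb hc
  rw [leibniz, bracket_swap a c, bracket_neg_right, bracket_swap (bracket a b) c, Pi.neg_apply,
    Pi.neg_apply]
  abel

theorem covD_neg_left (Γ : V → V →ₗ[ℝ] V →ₗ[ℝ] V) (a X : V → V) :
    covD Γ (-a) X = -covD Γ a X := by
  funext x
  simp [covD, add_comm]

theorem covD_sub_right (hX : DifferentiableAt ℝ X x) (hY : DifferentiableAt ℝ Y x) :
    covD Γ a (X - Y) x = covD Γ a X x - covD Γ a Y x := by
  simp only [covD, fderiv_sub hX hY, sub_apply, Pi.sub_apply, map_sub]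
  abel

theorem covD_congr_right (h : X =ᶠ[𝓝 x] Y) : covD Γ a X x = covD Γ a Y x := by
  simp only [covD, h.fderiv_eq, h.eq_of_nhds]

theorem covD_sub_covD_swap (hΓ : ∀ u v, Γ x u v = Γ x v u) (a b : V → V) :
    covD Γ a b x - covD Γ b a x = bracket a b x := by
  simp only [covD, bracket, dirD, hΓ (a x) (b x)]
  abel

theorem covD_bracket_right (hΓ : ∀ᶠ y in 𝓝 x, ∀ u v, Γ y u v = Γ y v u)
    (hbc : DifferentiableAt ℝ (covD Γ b c) x) (hcb : DifferentiableAt ℝ (covD Γ c b) x) :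
    covD Γ a (bracket b c) x = covD Γ a (covD Γ b c) x - covD Γ a (covD Γ c b) x := by
  rw [← covD_sub_right hbc hcb]
  exact covD_congr_right (hΓ.mono fun y hy ↦ (covD_sub_covD_swap hy b c).symm)

theorem bracket_bracket_eq_covD (hΓ : ∀ᶠ y in 𝓝 x, ∀ u v, Γ y u v = Γ y v u)
    (hbc : DifferentiableAt ℝ (covD Γ b c) x) (hcb : DifferentiableAt ℝ (covD Γ c b) x) :
    bracket a (bracket b c) x =
      covD Γ a (covD Γ b c) x - covD Γ a (covD Γ c b) x - covD Γ (bracket b c) a x := by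
  rw [← covD_bracket_right hΓ hbc hcb, covD_sub_covD_swap hΓ.self_of_nhds]

theorem curv_swap (Γ : V → V →ₗ[ℝ] V →ₗ[ℝ] V) (a b c : V → V) :
    curv Γ b a c = -curv Γ a b c := by
  funext x
  simp only [curv, curvOf, bracket_swap a b, covD_neg_left, Pi.neg_apply]
  abel

theorem IsVectorField.contDiffAt (hX : IsVectorField U X) (hU : IsOpen U) (hx : x ∈ U) :
    ContDiffAt ℝ ∞ X x :=
  ContDiffOn.contDiffAt hX (hU.mem_nhds hx)

theorem IsVectorField.differentiableAt (hX : IsVectorField U X) (hU : IsOpen U) (hx : x ∈ U) :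
    DifferentiableAt ℝ X x :=
  (hX.contDiffAt hU hx).differentiableAt (by simp)

protected theorem IsVectorField.dirD (hX : IsVectorField U X) (hU : IsOpen U)
    (ha : IsVectorField U a) : IsVectorField U (dirD a X) :=
  (hX.fderiv_of_isOpen hU (by simp)).clm_apply ha

protected theorem IsVectorField.bracket (ha : IsVectorField U a) (hU : IsOpen U)
    (hb : IsVectorField U b) : IsVectorField U (bracket a b) :=
  (hb.dirD hU ha).sub (ha.dirD hU hb)

end

protected theorem IsVectorField.covD (hX : IsVectorField U X) (hU : IsOpen U)
    (hΓ : IsConnection U Γ) (ha : IsVectorField U a) : IsVectorField U (covD Γ a X) := by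
  have hΓa : ∀ v, ContDiffOn ℝ ∞ (fun x ↦ Γ x (a x) v) U := fun v ↦
    contDiffOn_linearMap_apply (A := fun x ↦ (Γ x).flip v) (fun u ↦ hΓ u v) ha
  exact (hX.dirD hU ha).add (contDiffOn_linearMap_apply hΓa hX)

theorem curv_add_curv_add_curv_eq_zero (hU : IsOpen U) (hΓ : IsConnection U Γ)
    (hsymm : ∀ x ∈ U, ∀ u v, Γ x u v = Γ x v u) (ha : IsVectorField U a) (hb : IsVectorField U b)
    (hc : IsVectorField U c) (hx : x ∈ U) :
    curv Γ a b c x + curv Γ b c a x + curv Γ c a b x = 0 := by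
  have hsymm_nhds : ∀ᶠ y in 𝓝 x, ∀ u v, Γ y u v = Γ y v u :=
    Filter.eventually_of_mem (hU.mem_nhds hx) hsymm
  have hD {X Y : V → V} (hX : IsVectorField U X) (hY : IsVectorField U Y) :
      DifferentiableAt ℝ (covD Γ X Y) x := (hY.covD hU hΓ hX).differentiableAt hU hx
  have hC2 {X : V → V} (hX : IsVectorField U X) : ContDiffAt ℝ 2 X x :=
    (hX.contDiffAt hU hx).of_le ENat.LEInfty.out
  calc curv Γ a b c x + curv Γ b c a x + curv Γ c a b x
      = bracket a (bracket b c) x + bracket b (bracket c a) x + bracket c (bracket a b) x := by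
        rw [bracket_bracket_eq_covD hsymm_nhds (hD hb hc) (hD hc hb),
          bracket_bracket_eq_covD hsymm_nhds (hD hc ha) (hD ha hc),
          bracket_bracket_eq_covD hsymm_nhds (hD ha hb) (hD hb ha)]
        simp only [curv, curvOf]
        abel
    _ = 0 := bracket_jacobi (hC2 ha) (hC2 hb) (hC2 hc)

section Compatible

variable {Dop : (V → V) → (V → V) → (V → V)}

theorem CompatibleD.fderiv_fderiv_inner (hcomp : CompatibleD U Dop g) (hU : IsOpen U)
    (hD : ∀ {a X}, IsVectorField U a → IsVectorField U X → IsVectorField U (Dop a X))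
    (hg : ∀ u, ContDiffOn ℝ ∞ (fun x ↦ g x u) U) (ha : IsVectorField U a)
    (hb : IsVectorField U b) (hX : IsVectorField U X) (hY : IsVectorField U Y) (hx : x ∈ U) :
    fderiv ℝ (fun y ↦ fderiv ℝ (fun z ↦ ⟪g z (X z), Y z⟫) y (b y)) x (a x) =
      (⟪g x (Dop a (Dop b X) x), Y x⟫ + ⟪g x (Dop b X x), Dop a Y x⟫) +
        (⟪g x (Dop a X x), Dop b Y x⟫ + ⟪g x (X x), Dop a (Dop b Y) x⟫) := by
  have hdiff {X Y : V → V} (hX : IsVectorField U X) (hY : IsVectorField U Y) :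
      DifferentiableAt ℝ (fun y ↦ ⟪g y (X y), Y y⟫) x :=
    ((contDiffOn_inner_linearMap_apply hg hX hY).contDiffAt (hU.mem_nhds hx)).differentiableAt
      (by simp)
  have hbXY : (fun y ↦ fderiv ℝ (fun z ↦ ⟪g z (X z), Y z⟫) y (b y)) =ᶠ[𝓝 x]
      fun y ↦ ⟪g y (Dop b X y), Y y⟫ + ⟪g y (X y), Dop b Y y⟫ :=
    Filter.eventually_of_mem (hU.mem_nhds hx) (hcomp b X Y hb hX hY)
  rw [hbXY.fderiv_eq, fderiv_fun_add (hdiff (hD hb hX) hY) (hdiff hX (hD hb hY)), add_apply,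
    hcomp a _ _ ha (hD hb hX) hY x hx, hcomp a _ _ ha hX (hD hb hY) x hx]

theorem CompatibleD.inner_curvOf_left (hcomp : CompatibleD U Dop g) (hU : IsOpen U)
    (hD : ∀ {a X}, IsVectorField U a → IsVectorField U X → IsVectorField U (Dop a X))
    (hg : ∀ u, ContDiffOn ℝ ∞ (fun x ↦ g x u) U) (ha : IsVectorField U a)
    (hb : IsVectorField U b) (hX : IsVectorField U X) (hY : IsVectorField U Y) (hx : x ∈ U) :
    ⟪g x (curvOf Dop a b X x), Y x⟫ = -⟪g x (X x), curvOf Dop a b Y x⟫ := by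
  have commutator := VectorField.fderiv_apply_lieBracket
    ((contDiffOn_inner_linearMap_apply hg hX hY).contDiffAt (hU.mem_nhds hx))
    (by simpa using ENat.LEInfty.out)
    (hb.differentiableAt hU hx) (ha.differentiableAt hU hx)
  rw [← bracket_eq_lieBracket, hcomp _ X Y (ha.bracket hU hb) hX hY x hx,
    hcomp.fderiv_fderiv_inner hU hD hg ha hb hX hY hx,
    hcomp.fderiv_fderiv_inner hU hD hg hb ha hX hY hx] at commutator
  simp only [curvOf, map_sub, inner_sub_left, inner_sub_right]
  linarith

end Compatible

theorem inner_curv_swap (hU : IsOpen U) (hΓ : IsConnection U Γ)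
    (hg : ∀ u, ContDiffOn ℝ ∞ (fun x ↦ g x u) U) (hgx : (g x).IsSymmetric)
    (hcomp : Compatible U Γ g) (ha : IsVectorField U a) (hb : IsVectorField U b)
    (hc : IsVectorField U c) (hd : IsVectorField U d) (hx : x ∈ U) :
    ⟪g x (curv Γ a b d x), c x⟫ = -⟪g x (curv Γ a b c x), d x⟫ := by
  rw [hgx, real_inner_comm, curv,
    CompatibleD.inner_curvOf_left hcomp hU (fun ha hX ↦ hX.covD hU hΓ ha) hg ha hb hc hd hx,
    neg_neg]

theorem curvature_pair_symmetry_general (hU : IsOpen U) (hΓ : IsConnection U Γ)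
    (hg : ∀ u, ContDiffOn ℝ ∞ (fun x ↦ g x u) U) (hg_symm : ∀ x ∈ U, (g x).IsSymmetric)
    (hcomp : Compatible U Γ g) (hsymm : ∀ x ∈ U, ∀ u v, Γ x u v = Γ x v u)
    (ha : IsVectorField U a) (hb : IsVectorField U b) (hc : IsVectorField U c)
    (hd : IsVectorField U d) (hx : x ∈ U) :
    ⟪g x (curv Γ a b c x), d x⟫ = ⟪g x (curv Γ c d a x), b x⟫ := by
  let R (a b c d : {X : V → V // IsVectorField U X}) : ℝ := ⟪g x (curv Γ a b c x), d.1 x⟫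
  have skew_left (a b c d) : R b a c d = -R a b c d := by
    simp only [R, curv_swap Γ a b, Pi.neg_apply, map_neg, inner_neg_left]
  have skew_right (a b c d) : R a b d c = -R a b c d :=
    inner_curv_swap hU hΓ hg (hg_symm x hx) hcomp a.2 b.2 c.2 d.2 hx
  have bianchi (a b c d) : R a b c d + R b c a d + R c a b d = 0 := by
    simp only [R, ← inner_add_left, ← map_add]
    rw [curv_add_curv_add_curv_eq_zero hU hΓ hsymm a.2 b.2 c.2 hx, map_zero, inner_zero_left]
  exact pair_symmetry_of_skew_of_cyclic skew_left skew_right bianchi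
    ⟨a, ha⟩ ⟨b, hb⟩ ⟨c, hc⟩ ⟨d, hd⟩

/-- Eq. (LGS.1b): pair symmetry of the curvature of a Levi-Civita structure,
`ρ(a,b,c)·_g d = ρ(c,d,a)·_g b`. -/
theorem curvature_pair_symmetry
    (U : Set V) (hU : IsOpen U)
    (Γ : V → V →ₗ[ℝ] V →ₗ[ℝ] V) (hΓ : IsConnection U Γ)
    (g : V → V →ₗ[ℝ] V) (hg : IsMetric U g)
    (hcomp : Compatible U Γ g)
    (hsymm : ∀ x ∈ U, ∀ u v : V, Γ x u v = Γ x v u)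
    (a b c d : V → V) (ha : IsVectorField U a) (hb : IsVectorField U b)
    (hc : IsVectorField U c) (hd : IsVectorField U d)
    (x : V) (hx : x ∈ U) :
    ⟪g x (curv Γ a b c x), d x⟫ = ⟪g x (curv Γ c d a x), b x⟫ :=
  curvature_pair_symmetry_general hU hΓ hg.1 (fun y hy ↦ (hg.2 y hy).1) hcomp hsymm ha hb hc hd hx
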